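/- Let K be a field of characteristic p with separable closure K^sep, and let (V, φ) be a unit K[F^r]-module which is finite-dimensional over K, of dimension n. Then there exists a finite separable field extension K'/K (an intermediate field of K^sep/K, finite-dimensional over K) and an isomorphism of unit K'[F^r]-modules K' ⊗_K V ≅ (K')^{⊕n}, i.e. a K'-linear bijection carrying the endomorphism c ⊗ v ↦ c^q ⊗ φ(v) to the coordinatewise q-power map on (K')^{⊕n}. -/

import Mathlib

/-!
Common definitions: unit `R[F^r]`-modules (Emerton–Kisin / Lyubeznik style), following
the conventions of the paper.  Throughout, `q = p ^ r` and for a commutative ring `R` of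
(exponential) characteristic `p`, a unit `R[F^r]`-module is an `R`-module `M` together with
an additive `q`-semilinear map `φ : M → M` whose induced structural map
`R ⊗_{Frob} M → M`, `c ⊗ m ↦ c • φ m`, is bijective.
-/

open scoped TensorProduct

set_option synthInstance.maxHeartbeats 1000000

section Preamble

/-- `R` viewed as a module over itself via the `q = p ^ r`-power Frobenius:
`c • x = c ^ p ^ r * x`. -/
def FrobTwist (p r : ℕ) (R : Type*) : Type _ := R

instance (p r : ℕ) (R : Type*) [CommRing R] : AddCommGroup (FrobTwist p r R) :=
  inferInstanceAs (AddCommGroup R)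

noncomputable instance (p r : ℕ) (R : Type*) [CommRing R] [ExpChar R p] :
    Module R (FrobTwist p r R) :=
  Module.compHom R (iterateFrobenius R p r)

theorem FrobTwist.smul_def {p r : ℕ} {R : Type*} [CommRing R] [ExpChar R p] (c : R)
    (x : FrobTwist p r R) : c • x = (c ^ p ^ r * (show R from x) : R) := rfl

variable (p r : ℕ)
variable (R : Type*) [CommRing R] [ExpChar R p]
variable {M : Type*} [AddCommGroup M] [Module R M]

/-- `φ` is additive and `q = p ^ r`-semilinear: `φ (c • m) = c ^ q • φ m`. -/
def IsFrobSemilinear (φ : M →+ M) : Prop :=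
  ∀ (c : R) (m : M), φ (c • m) = c ^ p ^ r • φ m

/-- The structural map `R ⊗_{Frob} M → M`, `c ⊗ m ↦ c • φ m`. -/
noncomputable def unitMap (φ : M →+ M) (hφ : IsFrobSemilinear p r R φ) :
    FrobTwist p r R ⊗[R] M →+ M :=
  TensorProduct.liftAddHom
    (AddMonoidHom.mk'
      (fun c : FrobTwist p r R =>
        AddMonoidHom.mk' (fun m : M => (show R from c) • φ m)
          (fun m m' => by
            show (show R from c) • φ (m + m') =
              (show R from c) • φ m + (show R from c) • φ m'
            rw [map_add, smul_add]))
      (fun c c' => by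
        ext m
        show ((show R from c) + (show R from c')) • φ m = _
        rw [add_smul]
        rfl))
    (fun a c m => by
      show (a ^ p ^ r * (show R from c)) • φ m = (show R from c) • φ (a • m)
      rw [hφ, mul_comm, mul_smul])

/-- `(M, φ)` is a unit `R[F^r]`-module: `φ` is `q = p ^ r`-semilinear and the induced
structural map `R ⊗_{Frob} M → M` is bijective. -/
def IsUnitFMod (φ : M →+ M) : Prop :=
  ∃ hφ : IsFrobSemilinear p r R φ, Function.Bijective (unitMap p r R φ hφ)

/-- `(M, φ)` is finitely generated as a left `R[F^r]`-module: there is a finite subset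
`s ⊆ M` such that the only `φ`-stable `R`-submodule of `M` containing `s` is `M` itself. -/
def IsFGFMod (φ : M →+ M) : Prop :=
  ∃ s : Finset M, ∀ N : Submodule R M, (∀ x ∈ N, φ x ∈ N) → (↑s : Set M) ⊆ ↑N → N = ⊤

/-- A root of `(M, φ)`: a finitely generated submodule `M₀` such that the submodule
generated by `φ (M₀)` contains `M₀`, and such that the only `φ`-stable submodule
containing `M₀` is `M` itself. -/
def IsRoot (φ : M →+ M) (M₀ : Submodule R M) : Prop :=
  M₀.FG ∧ M₀ ≤ Submodule.span R (⇑φ '' ↑M₀) ∧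
    ∀ N : Submodule R M, (∀ x ∈ N, φ x ∈ N) → M₀ ≤ N → N = ⊤

end Preamble

/-!
Call a Frobenius-semilinear map `φ` on a finite-dimensional space étale if its values span; this is
what the unit condition provides, and it passes to base changes and quotients. Over a separably
closed field `L`, an étale `φ` has a nonzero fixed vector: a relation
`φ^m w = ∑_{i < m} a i • φ^i w` of minimal length turns the fixed-vector equation into one
separable polynomial equation in the last coordinate. Let `U` be the span of the fixed vectors. As
every equation `s ^ q - s = c` is solvable in `L`, the map `φ - 1` is onto on `U`, so a nonzero
fixed vector of `W ⧸ U` would lift to a fixed vector outside `U`; hence `U = W`. Finally, a basis of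
fixed vectors of `Ω ⊗[K] V` over the separable closure of `K` in `Ω` involves only finitely many
scalars, so it is defined over a finite separable extension of `K`.
-/

section SemilinearMap

variable {K L V W : Type*} [Field K] [Field L] [AddCommGroup V] [Module K V] [AddCommGroup W]
  [Module L W] {σ : K →+* L}

theorem injective_of_span_range_eq_top [FiniteDimensional K V] (φ : V →ₛₗ[σ] W)
    (hdim : Module.finrank K V = Module.finrank L W)
    (hφ : Submodule.span L (Set.range φ) = ⊤) : Function.Injective φ := by
  let b := Module.finBasis K V
  have hspan : ⊤ ≤ Submodule.span L (Set.range (φ ∘ b)) := by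
    rw [← hφ, Submodule.span_le, Set.range_comp, ← Set.image_univ, ← Submodule.top_coe (R := K),
      ← b.span_eq]
    exact Submodule.image_span_subset_span φ _
  have hindep : LinearIndependent L (φ ∘ b) :=
    linearIndependent_of_top_le_span_of_card_eq_finrank hspan (by simp [hdim])
  refine (injective_iff_map_eq_zero φ).2 fun v hv => b.ext_elem fun i => ?_
  have hsum : ∑ i, σ (b.repr v i) • (φ ∘ b) i = 0 := by
    rw [← hv]
    conv_rhs => rw [← b.sum_repr v, map_sum]
    simp only [map_smulₛₗ, Function.comp_apply]
  simpa using Fintype.linearIndependent_iff.1 hindep _ hsum i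

end SemilinearMap

section Endomorphism

variable {R M : Type*} [CommRing R] [AddCommGroup M] [Module R M] {σ : R →+* R}

theorem span_range_mapQ_eq_top (φ : M →ₛₗ[σ] M) (hφ : Submodule.span R (Set.range φ) = ⊤)
    {U : Submodule R M} (hU : U ≤ U.comap φ) :
    Submodule.span R (Set.range (U.mapQ U φ hU)) = ⊤ := by
  have himage : U.mkQ '' Set.range φ ⊆ Set.range (U.mapQ U φ hU) := by
    rintro _ ⟨_, ⟨w, rfl⟩, rfl⟩
    exact ⟨U.mkQ w, rfl⟩
  rw [eq_top_iff, ← U.range_mkQ, ← Submodule.map_top, ← hφ, Submodule.map_span]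
  exact Submodule.span_mono himage

theorem span_fixedPoints_le_comap (φ : M →ₛₗ[σ] M) :
    Submodule.span R (Function.fixedPoints φ) ≤
      (Submodule.span R (Function.fixedPoints φ)).comap φ :=
  Submodule.span_le.2 fun x hx => by
    rw [SetLike.mem_coe, Submodule.mem_comap, hx.eq]
    exact Submodule.subset_span hx

theorem equivFun_map_of_isFixedPt {ι : Type*} [Finite ι] (φ : M →ₛₗ[σ] M)
    (b : Module.Basis ι R M) (hb : ∀ i, Function.IsFixedPt φ (b i)) (x : M) :
    b.equivFun (φ x) = fun i => σ (b.equivFun x i) := by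
  have := Fintype.ofFinite ι
  have hφx : φ x = ∑ i, σ (b.equivFun x i) • b i := by
    conv_lhs => rw [← b.sum_equivFun x, map_sum]
    simp only [map_smulₛₗ, (hb _).eq]
  rw [hφx, ← b.equivFun_symm_apply, LinearEquiv.apply_symm_apply]

theorem isFixedPt_sum_smul_iterate (φ : M →ₛₗ[σ] M) (w : M) {m : ℕ} {a x : ℕ → R}
    (hw : φ^[m] w = ∑ i ∈ Finset.range m, a i • φ^[i] w)
    (hx₀ : x 0 = 0) (hx : ∀ i, x (i + 1) = σ (x i) + a i * σ (x m)) :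
    Function.IsFixedPt φ (∑ i ∈ Finset.range m, x (i + 1) • φ^[i] w) :=
  calc φ (∑ i ∈ Finset.range m, x (i + 1) • φ^[i] w)
    _ = ∑ i ∈ Finset.range m, σ (x (i + 1)) • φ^[i + 1] w := by
      simp only [map_sum, map_smulₛₗ, Function.iterate_succ_apply']
    _ = ∑ i ∈ Finset.range (m + 1), σ (x i) • φ^[i] w := by
      rw [Finset.sum_range_succ', hx₀, map_zero, zero_smul, add_zero]
    _ = ∑ i ∈ Finset.range m, (σ (x i) • φ^[i] w + σ (x m) • a i • φ^[i] w) := by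
      rw [Finset.sum_range_succ, hw, Finset.smul_sum, Finset.sum_add_distrib]
    _ = ∑ i ∈ Finset.range m, x (i + 1) • φ^[i] w := by
      simp only [hx, add_smul, smul_smul, mul_comm]

end Endomorphism

section CoordPoly

open Polynomial

/-- If `φ` is `q`-power semilinear and `φ^m w = ∑_{i < m} a i • φ^i w`, then
`∑_{i < m} x (i + 1) • φ^i w` is fixed by `φ` as soon as `x i` is the value of `coordPoly q a i` at
`t = x m`. The index is shifted by one so that the recursion can start at `0`. -/
noncomputable def coordPoly {R : Type*} [CommRing R] (q : ℕ) (a : ℕ → R) : ℕ → R[X]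
  | 0 => 0
  | i + 1 => coordPoly q a i ^ q + C (a i) * X ^ q

section CommRing

variable {R : Type*} [CommRing R] {q : ℕ}

theorem X_pow_dvd_coordPoly (hq : q ≠ 0) (a : ℕ → R) (i : ℕ) : X ^ q ∣ coordPoly q a i := by
  induction i with
  | zero => exact dvd_zero _
  | succ i ih => exact dvd_add (dvd_pow ih hq) (dvd_mul_left _ _)

theorem derivative_coordPoly (hqR : (q : R) = 0) (a : ℕ → R) (i : ℕ) :
    derivative (coordPoly q a i) = 0 := by
  cases i <;> simp [coordPoly, derivative_pow, hqR]

theorem coeff_coordPoly_succ (hq : 1 < q) (a : ℕ → R) (i : ℕ) :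
    (coordPoly q a (i + 1)).coeff q = a i := by
  have hdvd : X ^ (q * q) ∣ coordPoly q a i ^ q := by
    rw [pow_mul]
    exact pow_dvd_pow_of_dvd (X_pow_dvd_coordPoly (by omega) a i) q
  have hcoeff : (coordPoly q a i ^ q).coeff q = 0 := X_pow_dvd_iff.1 hdvd q (by nlinarith)
  simp [coordPoly, hcoeff]

theorem coordPoly_ne_zero [IsDomain R] (hq : 1 < q) {a : ℕ → R} {i m : ℕ} (him : i < m)
    (hai : a i ≠ 0) : coordPoly q a m ≠ 0 := by
  induction m, him using Nat.le_induction with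
  | base => exact fun h => hai (by rw [← coeff_coordPoly_succ hq a i, h, coeff_zero])
  | succ m _ ih =>
    intro h
    have ham : a m = 0 := by rw [← coeff_coordPoly_succ hq a m, h, coeff_zero]
    refine pow_ne_zero q ih ?_
    simpa [coordPoly, ham] using h

end CommRing

theorem exists_isRoot_ne_zero_of_separable {L : Type*} [Field L] [IsSepClosed L] {f : L[X]}
    (hf : f.Separable) (hdeg : 1 < f.natDegree) : ∃ t ≠ 0, f.IsRoot t := by
  classical
  have hcard : 1 < f.roots.toFinset.card := by
    rwa [Multiset.toFinset_card_of_nodup (nodup_roots hf),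
      ← (IsSepClosed.splits_of_separable f hf).natDegree_eq_card_roots]
  obtain ⟨t, ht, ht₀⟩ := Finset.exists_mem_ne hcard 0
  exact ⟨t, ht₀, isRoot_of_mem_roots (Multiset.mem_toFinset.1 ht)⟩

theorem exists_ne_zero_eval_coordPoly_eq_self {L : Type*} [Field L] [IsSepClosed L] {q : ℕ}
    (hq : 1 < q) (hqL : (q : L) = 0) {a : ℕ → L} {i m : ℕ} (him : i < m) (hai : a i ≠ 0) :
    ∃ t ≠ 0, (coordPoly q a m).eval t = t := by
  have hdeg : 1 < (coordPoly q a m).natDegree := by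
    have := natDegree_le_of_dvd (X_pow_dvd_coordPoly (by omega) a m) (coordPoly_ne_zero hq him hai)
    rw [natDegree_X_pow] at this
    omega
  have hsep : (coordPoly q a m - X).Separable :=
    ⟨0, -1, by simp [derivative_coordPoly hqL]⟩
  obtain ⟨t, ht₀, ht⟩ := exists_isRoot_ne_zero_of_separable hsep
    (by rwa [natDegree_sub_eq_left_of_natDegree_lt (by rwa [natDegree_X])])
  exact ⟨t, ht₀, by simpa [sub_eq_zero] using ht⟩

end CoordPoly

section FixedVectors

variable {L W : Type*} [Field L] [AddCommGroup W] [Module L W] {p r : ℕ} [Fact p.Prime] [CharP L p]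

theorem exists_mem_span_fixedPoints_map_sub_self_eq [IsSepClosed L] (hr : r ≠ 0)
    (φ : W →ₛₗ[iterateFrobenius L p r] W) {u : W}
    (hu : u ∈ Submodule.span L (Function.fixedPoints φ)) :
    ∃ z ∈ Submodule.span L (Function.fixedPoints φ), φ z - z = u := by
  have hq : 2 ≤ p ^ r := Nat.one_lt_pow hr (Fact.out : p.Prime).one_lt
  induction hu using Submodule.closure_induction with
  | zero => exact ⟨0, zero_mem _, by simp⟩
  | add _ _ _ _ hu₁ hu₂ =>
    obtain ⟨z₁, hz₁, rfl⟩ := hu₁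
    obtain ⟨z₂, hz₂, rfl⟩ := hu₂
    exact ⟨z₁ + z₂, add_mem hz₁ hz₂, by rw [map_add]; abel⟩
  | smul_mem c x hx =>
    obtain ⟨s, hs⟩ := IsSepClosed.exists_root_C_mul_X_pow_add_C_mul_X_add_C (1 : L) (-1) (-c)
      (n := p ^ r) (by simp [hr]) hq (by simp)
    have hs' : iterateFrobenius L p r s - s = c := by
      rw [iterateFrobenius_def]
      linear_combination hs
    refine ⟨s • x, Submodule.smul_mem _ _ (Submodule.subset_span hx), ?_⟩
    rw [map_smulₛₗ, hx.eq, ← sub_smul, hs']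

variable [FiniteDimensional L W]

theorem exists_linearIndepOn_range_and_eq_sum (e : ℕ → W) :
    ∃ (m : ℕ) (a : ℕ → L), LinearIndepOn L e (Finset.range m) ∧
      e m = ∑ i ∈ Finset.range m, a i • e i := by
  suffices ∃ m, LinearIndepOn L e (Finset.range m) ∧
      e m ∈ Submodule.span L (e '' Finset.range m) by
    obtain ⟨m, hindep, hmem⟩ := this
    obtain ⟨a, ha⟩ := (Submodule.mem_span_image_finset_iff_exists_fun' L).1 hmem
    exact ⟨m, a, hindep, ha.symm⟩
  by_contra! hnotMem
  have hindep : ∀ m, LinearIndepOn L e (Finset.range m) := by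
    intro m
    induction m with
    | zero => simp
    | succ m ih =>
      rw [Finset.range_add_one, Finset.coe_insert, linearIndepOn_insert (by simp)]
      exact ⟨ih, hnotMem m ih⟩
  have hcard := (hindep (Module.finrank L W + 1)).fintype_card_le_finrank
  simp at hcard

theorem exists_basis_subset_of_span_eq_top {s : Set W} (hs : Submodule.span L s = ⊤) :
    ∃ b : Module.Basis (Fin (Module.finrank L W)) L W, ∀ i, b i ∈ s := by
  let b := Module.Basis.ofSpan hs.ge
  refine ⟨b.reindex (b.indexEquiv (Module.finBasis L W)), fun i => ?_⟩
  rw [Module.Basis.reindex_apply]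
  exact Module.Basis.ofSpan_subset hs.ge ⟨_, rfl⟩

variable [IsSepClosed L]

theorem exists_ne_zero_isFixedPt [Nontrivial W] (hr : r ≠ 0)
    (φ : W →ₛₗ[iterateFrobenius L p r] W) (hφ : Function.Injective φ) :
    ∃ x ≠ 0, Function.IsFixedPt φ x := by
  obtain ⟨w, hw⟩ := exists_ne (0 : W)
  obtain ⟨m, a, hindep, ha⟩ := exists_linearIndepOn_range_and_eq_sum (L := L) fun i => φ^[i] w
  obtain ⟨i, him, hai⟩ : ∃ i < m, a i ≠ 0 := by
    by_contra! hzero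
    have hiter : φ^[m] w = φ^[m] 0 := by
      rw [iterate_map_zero, ha]
      exact Finset.sum_eq_zero fun i hi => by rw [hzero i (Finset.mem_range.1 hi), zero_smul]
    exact hw (hφ.iterate m hiter)
  have hq : 1 < p ^ r := Nat.one_lt_pow hr (Fact.out : p.Prime).one_lt
  obtain ⟨t, ht₀, ht⟩ := exists_ne_zero_eval_coordPoly_eq_self hq (by simp [hr]) him hai
  let x i := (coordPoly (p ^ r) a i).eval t
  refine ⟨_, fun hsum => ?_, isFixedPt_sum_smul_iterate φ w (x := x) ha (by simp [x, coordPoly])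
    fun i => by simp [x, coordPoly, ht, iterateFrobenius_def]⟩
  have hlast := linearIndepOn_finset_iff.1 hindep _ hsum (m - 1) (Finset.mem_range.2 (by omega))
  rw [Nat.sub_add_cancel (by omega)] at hlast
  exact ht₀ (ht.symm.trans hlast)

theorem span_fixedPoints_eq_top (hr : r ≠ 0) (φ : W →ₛₗ[iterateFrobenius L p r] W)
    (hφ : Submodule.span L (Set.range φ) = ⊤) :
    Submodule.span L (Function.fixedPoints φ) = ⊤ := by
  set U := Submodule.span L (Function.fixedPoints φ)
  by_contra hne
  have : Nontrivial (W ⧸ U) := Submodule.Quotient.nontrivial_iff.2 hne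
  let ψ := U.mapQ U φ (span_fixedPoints_le_comap φ)
  have hψ : Function.Injective ψ :=
    injective_of_span_range_eq_top ψ rfl (span_range_mapQ_eq_top φ hφ _)
  obtain ⟨y, hy₀, hy⟩ := exists_ne_zero_isFixedPt hr ψ hψ
  obtain ⟨y, rfl⟩ := U.mkQ_surjective y
  have hyU : φ y - y ∈ U := (Submodule.Quotient.eq U).1 hy
  obtain ⟨z, hz, hzy⟩ := exists_mem_span_fixedPoints_map_sub_self_eq hr φ hyU
  have hfixed : φ (y - z) = y - z := by
    rw [map_sub, sub_eq_sub_iff_sub_eq_sub, hzy]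
  have hyzU : y - z ∈ U := Submodule.subset_span hfixed
  exact hy₀ ((Submodule.Quotient.mk_eq_zero U).2 (by simpa using add_mem hyzU hz))

end FixedVectors

section BaseChange

section Frobenius

variable {p r : ℕ} {K V : Type*} [CommRing K] [ExpChar K p] [AddCommGroup V] [Module K V]
  (L : Type*) [CommRing L] [Algebra K L] [ExpChar L p]

/-- The base change of a `q`-power semilinear map along `K → L`, sending `c ⊗ v` to
`c ^ q ⊗ φ v`, where `q = p ^ r`. -/
noncomputable def frobeniusBaseChange (φ : V →ₛₗ[iterateFrobenius K p r] V) :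
    L ⊗[K] V →ₛₗ[iterateFrobenius L p r] L ⊗[K] V where
  __ := TensorProduct.map (LinearMap.iterateFrobenius K L p r) φ
  map_smul' c x := by
    induction x with
    | zero => simp
    | add x y hx hy => simp_all
    | tmul d v =>
      simp [TensorProduct.smul_tmul', LinearMap.iterateFrobenius_def, iterateFrobenius_def, mul_pow]

@[simp]
theorem frobeniusBaseChange_tmul (φ : V →ₛₗ[iterateFrobenius K p r] V) (c : L) (v : V) :
    frobeniusBaseChange L φ (c ⊗ₜ v) = (c ^ p ^ r) ⊗ₜ φ v :=
  rfl

theorem span_range_frobeniusBaseChange_eq_top (φ : V →ₛₗ[iterateFrobenius K p r] V)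
    (hφ : Submodule.span K (Set.range φ) = ⊤) :
    Submodule.span L (Set.range (frobeniusBaseChange L φ)) = ⊤ := by
  rw [eq_top_iff, ← Submodule.baseChange_top, ← hφ, Submodule.baseChange_span]
  refine Submodule.span_mono ?_
  rintro _ ⟨_, ⟨v, rfl⟩, rfl⟩
  exact ⟨1 ⊗ₜ v, by simp⟩

variable {L} {E : Type*} [CommRing E] [Algebra K E] [ExpChar E p]

theorem rTensor_frobeniusBaseChange (j : E →ₐ[K] L) (φ : V →ₛₗ[iterateFrobenius K p r] V)
    (x : E ⊗[K] V) :
    j.toLinearMap.rTensor V (frobeniusBaseChange E φ x) =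
      frobeniusBaseChange L φ (j.toLinearMap.rTensor V x) := by
  induction x with
  | zero => simp
  | add x y hx hy => simp_all
  | tmul c v => simp

end Frobenius

section AlgHom

variable {K V E L : Type*} [CommRing K] [AddCommGroup V] [Module K V] [CommRing E] [Algebra K E]
  [CommRing L] [Algebra K L]

theorem rTensor_algHom_smul (j : E →ₐ[K] L) (c : E) (x : E ⊗[K] V) :
    j.toLinearMap.rTensor V (c • x) = j c • j.toLinearMap.rTensor V x := by
  induction x with
  | zero => simp
  | add x y hx hy => simp_all
  | tmul d v => simp [TensorProduct.smul_tmul']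

theorem linearIndependent_of_rTensor_algHom {ι : Type*} [Finite ι] (j : E →ₐ[K] L)
    (hj : Function.Injective j) {w : ι → E ⊗[K] V}
    (hw : LinearIndependent L fun i => j.toLinearMap.rTensor V (w i)) :
    LinearIndependent E w := by
  have := Fintype.ofFinite ι
  refine Fintype.linearIndependent_iff.2 fun g hg i => ?_
  have hjg : ∑ i, j (g i) • j.toLinearMap.rTensor V (w i) = 0 := by
    simp only [← rTensor_algHom_smul, ← map_sum, hg, map_zero]
  exact (map_eq_zero_iff j hj).1 (Fintype.linearIndependent_iff.1 hw _ hjg i)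

end AlgHom

theorem exists_finiteDimensional_le_subset_range_rTensor {K Ω V : Type*} [Field K] [Field Ω]
    [Algebra K Ω] [AddCommGroup V] [Module K V] (F : IntermediateField K Ω)
    [Algebra.IsAlgebraic K F] {s : Set (F ⊗[K] V)} (hs : s.Finite) :
    ∃ (E : IntermediateField K Ω) (hE : E ≤ F), FiniteDimensional K E ∧
      s ⊆ LinearMap.range ((IntermediateField.inclusion hE).toLinearMap.rTensor V) := by
  obtain ⟨N, hN, hsN⟩ := TensorProduct.exists_finite_submodule_left_of_setFinite s hs
  obtain ⟨t, rfl⟩ := Module.Finite.iff_fg.1 hN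
  let E := IntermediateField.adjoin K (F.val '' t)
  have hE : E ≤ F := IntermediateField.adjoin_le_iff.2 (by rintro _ ⟨x, -, rfl⟩; exact x.2)
  have hfin : FiniteDimensional K E := by
    have := (t.finite_toSet.image F.val).to_subtype
    refine IntermediateField.finiteDimensional_adjoin ?_
    rintro _ ⟨x, -, rfl⟩
    exact (Algebra.IsIntegral.isIntegral x).map F.val
  have htE : Submodule.span K t ≤ LinearMap.range (IntermediateField.inclusion hE).toLinearMap :=
    Submodule.span_le.2 fun x hx =>
      ⟨⟨x, IntermediateField.subset_adjoin K _ ⟨x, hx, rfl⟩⟩, rfl⟩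
  refine ⟨E, hE, hfin, hsN.trans ?_⟩
  rw [← LinearMap.codRestrictOfInjective_comp (Submodule.subtype _)
    (IntermediateField.inclusion hE).toLinearMap (IntermediateField.inclusion_injective hE)
    fun x => htE x.2, LinearMap.rTensor_comp]
  exact LinearMap.range_comp_le_range _ _

theorem exists_basis_isFixedPt_of_mem_range_rTensor {p r : ℕ} {K E L V ι : Type*} [Field K]
    [ExpChar K p] [Field E] [ExpChar E p] [Algebra K E] [Field L] [ExpChar L p] [Algebra K L]
    [AddCommGroup V] [Module K V] [FiniteDimensional K V] [Finite ι] (j : E →ₐ[K] L)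
    (φ : V →ₛₗ[iterateFrobenius K p r] V) (b : Module.Basis ι L (L ⊗[K] V))
    (hb : ∀ i, Function.IsFixedPt (frobeniusBaseChange L φ) (b i))
    (hbj : ∀ i, b i ∈ LinearMap.range (j.toLinearMap.rTensor V)) :
    ∃ b' : Module.Basis ι E (E ⊗[K] V),
      ∀ i, Function.IsFixedPt (frobeniusBaseChange E φ) (b' i) := by
  have := Fintype.ofFinite ι
  choose w hw using hbj
  have hindep : LinearIndependent E w :=
    linearIndependent_of_rTensor_algHom j j.injective (by simpa only [hw] using b.linearIndependent)
  have hcard : Fintype.card ι = Module.finrank E (E ⊗[K] V) := by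
    rw [← Module.finrank_eq_card_basis b, Module.finrank_baseChange, Module.finrank_baseChange]
  have hinj : Function.Injective (j.toLinearMap.rTensor V) :=
    Module.Flat.rTensor_preserves_injective_linearMap j.toLinearMap j.injective
  refine ⟨.mk hindep (hindep.span_eq_top_of_card_eq_finrank' hcard).ge, fun i => hinj ?_⟩
  rw [Module.Basis.mk_apply, rTensor_frobeniusBaseChange, hw, (hb i).eq]

theorem exists_separable_basis_isFixedPt {p r : ℕ} [Fact p.Prime] (hr : r ≠ 0)
    {K V : Type*} [Field K] [CharP K p] [AddCommGroup V] [Module K V] [FiniteDimensional K V]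
    (Ω : Type*) [Field Ω] [IsSepClosed Ω] [Algebra K Ω] (φ : V →ₛₗ[iterateFrobenius K p r] V)
    (hφ : Submodule.span K (Set.range φ) = ⊤) :
    ∃ K' : IntermediateField K Ω, FiniteDimensional K K' ∧ Algebra.IsSeparable K K' ∧
      ∃ b : Module.Basis (Fin (Module.finrank K V)) K' (K' ⊗[K] V),
        ∀ i, Function.IsFixedPt (frobeniusBaseChange K' φ) (b i) := by
  let F := separableClosure K Ω
  have : IsSepClosed F := IsSepClosure.sep_closed K
  have : CharP F p := charP_of_injective_algebraMap' K p
  have hfixed : Submodule.span F (Function.fixedPoints (frobeniusBaseChange F φ)) = ⊤ :=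
    span_fixedPoints_eq_top hr _ (span_range_frobeniusBaseChange_eq_top F φ hφ)
  have hbasis := exists_basis_subset_of_span_eq_top hfixed
  rw [Module.finrank_baseChange] at hbasis
  obtain ⟨b, hb⟩ := hbasis
  obtain ⟨E, hE, hfin, hbE⟩ :=
    exists_finiteDimensional_le_subset_range_rTensor F (Set.finite_range b)
  exact ⟨E, hfin, (le_separableClosure_iff K Ω E).1 hE, exists_basis_isFixedPt_of_mem_range_rTensor
    (IntermediateField.inclusion hE) φ b hb fun i => hbE ⟨i, rfl⟩⟩

end BaseChange

section UnitModule

variable {p r : ℕ} {R M : Type*} [CommRing R] [ExpChar R p] [AddCommGroup M] [Module R M]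
  {φ : M →+ M}

/-- A `q`-power semilinear additive endomorphism as a bundled semilinear map, so that the library's
linear algebra applies to it. -/
def IsFrobSemilinear.toSemilinearMap (hφ : IsFrobSemilinear p r R φ) :
    M →ₛₗ[iterateFrobenius R p r] M where
  __ := φ
  map_smul' := hφ

theorem IsFrobSemilinear.span_range_eq_top (hφ : IsFrobSemilinear p r R φ)
    (hunit : Function.Surjective (unitMap p r R φ hφ)) :
    Submodule.span R (Set.range φ) = ⊤ := by
  refine eq_top_iff.2 fun m _ => ?_
  obtain ⟨x, rfl⟩ := hunit m
  induction x with
  | zero => rw [map_zero]; exact zero_mem _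
  | add x y hx hy => rw [map_add]; exact add_mem (hx trivial) (hy trivial)
  | tmul c m => exact Submodule.smul_mem _ _ (Submodule.subset_span ⟨m, rfl⟩)

end UnitModule

theorem statement2_general (p r : ℕ) [Fact p.Prime] (hr : 0 < r)
    (K : Type*) [Field K] [CharP K p]
    (Ω : Type*) [Field Ω] [Algebra K Ω] [IsSepClosed Ω]
    (V : Type*) [AddCommGroup V] [Module K V] [FiniteDimensional K V]
    (φ : V →+ V) (hφ : IsFrobSemilinear p r K φ)
    (hunit : Function.Surjective (unitMap p r K φ hφ)) :
    ∃ K' : IntermediateField K Ω, FiniteDimensional K K' ∧ Algebra.IsSeparable K K' ∧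
      ∃ φ' : K' ⊗[K] V →+ K' ⊗[K] V,
        (∀ (c : K') (v : V), φ' (c ⊗ₜ[K] v) = (c ^ p ^ r) ⊗ₜ[K] φ v) ∧
        ∃ e : (K' ⊗[K] V) ≃ₗ[K'] (Fin (Module.finrank K V) → K'),
          ∀ x, e (φ' x) = fun i => (e x i) ^ p ^ r := by
  obtain ⟨K', hfin, hsep, b, hb⟩ := exists_separable_basis_isFixedPt hr.ne' Ω hφ.toSemilinearMap
    (hφ.span_range_eq_top hunit)
  exact ⟨K', hfin, hsep, (frobeniusBaseChange K' hφ.toSemilinearMap).toAddMonoidHom,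
    fun c v => frobeniusBaseChange_tmul K' hφ.toSemilinearMap c v,
    b.equivFun, equivFun_map_of_isFixedPt _ b hb⟩

/-- For a finite-dimensional unit `K[F^r]`-module `(V, φ)` of dimension
`n`, there is a finite separable extension `K'/K` inside `K^sep` such that
`K' ⊗_K V`, with its induced endomorphism, is isomorphic as a unit `K'[F^r]`-module to
`(K')^{⊕n}` with the coordinatewise `q`-power structure. -/
theorem statement2 (p r : ℕ) [Fact p.Prime] (hr : 0 < r)
    (K : Type*) [Field K] [CharP K p]
    (Ksep : Type*) [Field Ksep] [Algebra K Ksep] [IsSepClosure K Ksep]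
    (V : Type*) [AddCommGroup V] [Module K V] [FiniteDimensional K V]
    (n : ℕ) (hn : Module.finrank K V = n)
    (φ : V →+ V) (hφ : IsFrobSemilinear p r K φ)
    (hunit : Function.Bijective (unitMap p r K φ hφ)) :
    ∃ K' : IntermediateField K Ksep, FiniteDimensional K K' ∧
      ∃ φ' : K' ⊗[K] V →+ K' ⊗[K] V,
        (∀ (c : K') (v : V), φ' (c ⊗ₜ[K] v) = (c ^ p ^ r) ⊗ₜ[K] φ v) ∧
        ∃ e : (K' ⊗[K] V) ≃ₗ[K'] (Fin n → K'),
          ∀ x, e (φ' x) = fun i => (e x i) ^ p ^ r := by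
  subst hn
  have : IsSepClosed Ksep := IsSepClosure.sep_closed K
  obtain ⟨K', hfin, -, h⟩ := statement2_general p r hr K Ksep V φ hφ hunit.surjective
  exact ⟨K', hfin, h⟩
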